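/- arXiv:2212.07857 — 3 statements merged into one kernel-verified Lean document; each statement's English description precedes it below -/
import Mathlib

section
/- If A and B are positive definite octonionic Hermitian 2×2 matrices then det(A,B) > 0, and if A and B are nonnegative definite then det(A,B) ≥ 0. (Lemma 5.9.) -/
noncomputable section

open scoped Quaternion

/-- The octonions, realized as pairs of quaternions (Cayley–Dickson). -/
abbrev Oct : Type := ℍ[ℝ] × ℍ[ℝ]

/-- Octonionic multiplication: (x,y)·(w,z) = (xw − z̄y, zx + yw̄). -/
def omul (a b : Oct) : Oct :=
  (a.1 * b.1 - star b.2 * a.2, b.2 * a.1 + a.2 * star b.1)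

/-- Octonionic conjugation. -/
def oconj (a : Oct) : Oct := (star a.1, -a.2)

/-- Real part of an octonion. -/
def oRe (a : Oct) : ℝ := a.1.re

/-- Squared norm |q|² = Re(q·q̄). -/
def onSq (a : Oct) : ℝ := oRe (omul a (oconj a))

/-- Octonionic Hermitian 2×2 matrix: (α, β, q) represents [[α, q],[q̄, β]]. -/
abbrev Herm : Type := ℝ × ℝ × Oct

/-- Determinant of an octonionic Hermitian 2×2 matrix. -/
def detH (A : Herm) : ℝ := A.1 * A.2.1 - onSq A.2.2

/-- The quadratic form ξ ↦ Re(ξ*Aξ). -/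
def qform (A : Herm) (ξ : Oct × Oct) : ℝ :=
  A.1 * onSq ξ.1 + A.2.1 * onSq ξ.2 + 2 * oRe (omul (oconj ξ.1) (omul A.2.2 ξ.2))

/-- Positive definiteness. -/
def PosDefH (A : Herm) : Prop := ∀ ξ : Oct × Oct, ξ ≠ 0 → 0 < qform A ξ

/-- Nonnegative definiteness. -/
def NonnegDefH (A : Herm) : Prop := ∀ ξ : Oct × Oct, 0 ≤ qform A ξ

/-- Mixed determinant of two octonionic Hermitian 2×2 matrices. -/
def mdet (A B : Herm) : ℝ :=
  (1 / 2) * (A.1 * B.2.1 + B.1 * A.2.1 - 2 * oRe (omul A.2.2 (oconj B.2.2)))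

/-!
Write `A = (α, β, q)`. Testing `qform B` on `(-q, α)`, where `α` is a real octonion, gives
`2 α · mdet A B = qform B (-q, α) + B₁₁ · det A`, and the case `B = A` reads
`α · det A = qform A (-q, α)`. So definiteness of `A` and `B` decides the sign of `mdet A B` as soon
as `α > 0`. If `A` is nonnegative definite and `α = 0`, then `q = 0` and
`mdet A B = B₁₁ · β / 2`.
-/

/-- The unit `(1, 0)` of the octonions, used to build test vectors with a real entry. The numeral
`1` cannot be used for it: in the product type `Oct` it stands for `(1, 1)`. -/
def octUnit : Oct := (1, 0)

lemma octUnit_ne_zero : octUnit ≠ 0 := by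
  simp [octUnit, Prod.ext_iff]

lemma onSq_octUnit : onSq octUnit = 1 := by
  simp [octUnit, onSq, oRe, omul, oconj]

lemma omul_octUnit (q : Oct) : omul q octUnit = q := by
  simp [octUnit, omul]

lemma smul_omul (s : ℝ) (p q : Oct) : omul (s • p) q = s • omul p q := by
  simp [omul, smul_sub, smul_add]

lemma omul_smul (s : ℝ) (p q : Oct) : omul p (s • q) = s • omul p q := by
  simp [omul, smul_sub, smul_add]

lemma oconj_smul (s : ℝ) (q : Oct) : oconj (s • q) = s • oconj q := by
  simp [oconj]

lemma oRe_smul (s : ℝ) (q : Oct) : oRe (s • q) = s * oRe q := by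
  simp [oRe]

lemma onSq_smul (s : ℝ) (q : Oct) : onSq (s • q) = s ^ 2 * onSq q := by
  rw [onSq, oconj_smul, smul_omul, omul_smul, oRe_smul, oRe_smul, ← onSq]
  ring

lemma oRe_oconj_omul (p q : Oct) : oRe (omul (oconj p) q) = oRe (omul p (oconj q)) := by
  simp [oRe, omul, oconj]

lemma onSq_eq_normSq_add_normSq (q : Oct) :
    onSq q = Quaternion.normSq q.1 + Quaternion.normSq q.2 := by
  simp [onSq, oRe, omul, oconj, Quaternion.self_mul_star, Quaternion.star_mul_self]

lemma onSq_eq_zero_iff {q : Oct} : onSq q = 0 ↔ q = 0 := by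
  rw [onSq_eq_normSq_add_normSq,
    add_eq_zero_iff_of_nonneg Quaternion.normSq_nonneg Quaternion.normSq_nonneg,
    Quaternion.normSq_eq_zero, Quaternion.normSq_eq_zero, Prod.ext_iff]
  rfl

lemma qform_zero_right (A : Herm) (p : Oct) : qform A (p, 0) = A.1 * onSq p := by
  simp [qform, onSq, oRe, omul, oconj]

lemma qform_zero_left (A : Herm) (p : Oct) : qform A (0, p) = A.2.1 * onSq p := by
  simp [qform, onSq, oRe, omul, oconj]

lemma qform_smul_octUnit (A : Herm) (p : Oct) (s t : ℝ) :
    qform A (s • p, t • octUnit) =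
      A.1 * s ^ 2 * onSq p + A.2.1 * t ^ 2 + 2 * s * t * oRe (omul p (oconj A.2.2)) := by
  rw [qform, onSq_smul, onSq_smul, onSq_octUnit, omul_smul, omul_octUnit, oRe_oconj_omul,
    oconj_smul, smul_omul, omul_smul, oRe_smul, oRe_smul]
  ring

lemma mdet_self (A : Herm) : mdet A A = detH A := by
  unfold mdet detH onSq
  ring

lemma two_mul_fst_diag_mul_mdet (A B : Herm) :
    2 * A.1 * mdet A B = qform B (-A.2.2, A.1 • octUnit) + B.1 * detH A := by
  rw [← neg_one_smul ℝ A.2.2, qform_smul_octUnit]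
  unfold mdet detH onSq
  ring

lemma fst_diag_mul_detH (A : Herm) :
    A.1 * detH A = qform A (-A.2.2, A.1 • octUnit) := by
  have hself := two_mul_fst_diag_mul_mdet A A
  rw [mdet_self] at hself
  linarith

lemma mdet_of_offDiag_eq_zero {A : Herm} (B : Herm) (hq : A.2.2 = 0) :
    mdet A B = (A.1 * B.2.1 + B.1 * A.2.1) / 2 := by
  have hre : oRe (omul 0 (oconj B.2.2)) = 0 := by simp [oRe, omul]
  rw [mdet, hq, hre]
  ring

namespace NonnegDefH

variable {A : Herm}

lemma fst_diag_nonneg (hA : NonnegDefH A) : 0 ≤ A.1 := by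
  simpa [qform_zero_right, onSq_octUnit] using hA (octUnit, 0)

lemma snd_diag_nonneg (hA : NonnegDefH A) : 0 ≤ A.2.1 := by
  simpa [qform_zero_left, onSq_octUnit] using hA (0, octUnit)

lemma offDiag_eq_zero (hA : NonnegDefH A) (hα : A.1 = 0) : A.2.2 = 0 := by
  have hform : qform A (-(A.2.1 + 1) • A.2.2, onSq A.2.2 • octUnit) =
      -((A.2.1 + 2) * onSq A.2.2 ^ 2) := by
    rw [qform_smul_octUnit, hα, ← onSq]
    ring
  have hle : (A.2.1 + 2) * onSq A.2.2 ^ 2 ≤ 0 := neg_nonneg.1 (hform ▸ hA _)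
  have hsq : onSq A.2.2 ^ 2 ≤ 0 :=
    nonpos_of_mul_nonpos_right hle (by linarith [hA.snd_diag_nonneg])
  exact onSq_eq_zero_iff.1 (sq_nonpos_iff _ |>.1 hsq)

lemma detH_nonneg (hA : NonnegDefH A) : 0 ≤ detH A := by
  obtain hα | hα := hA.fst_diag_nonneg.eq_or_lt'
  · rw [detH, hα, onSq_eq_zero_iff.2 (hA.offDiag_eq_zero hα), zero_mul, sub_zero]
  · exact nonneg_of_mul_nonneg_right (fst_diag_mul_detH A ▸ hA _) hα

lemma snd_diag_pos (hA : NonnegDefH A) (hα : A.1 = 0) (hA₀ : A ≠ 0) : 0 < A.2.1 :=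
  hA.snd_diag_nonneg.lt_of_ne' fun hβ ↦
    hA₀ (Prod.ext hα (Prod.ext hβ (hA.offDiag_eq_zero hα)))

end NonnegDefH

namespace PosDefH

variable {A : Herm}

lemma nonnegDefH (hA : PosDefH A) : NonnegDefH A := by
  intro ξ
  obtain rfl | hξ := eq_or_ne ξ 0
  · simp [qform, onSq, oRe, omul]
  · exact (hA ξ hξ).le

lemma fst_diag_pos (hA : PosDefH A) : 0 < A.1 := by
  simpa [qform_zero_right, onSq_octUnit] using hA (octUnit, 0) (by simp [octUnit_ne_zero])

lemma ne_zero (hA : PosDefH A) : A ≠ 0 := by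
  rintro rfl
  exact hA.fst_diag_pos.false

end PosDefH

lemma mdet_nonneg {A B : Herm} (hA : NonnegDefH A) (hB : NonnegDefH B) : 0 ≤ mdet A B := by
  obtain hα | hα := hA.fst_diag_nonneg.eq_or_lt'
  · rw [mdet_of_offDiag_eq_zero B (hA.offDiag_eq_zero hα), hα, zero_mul, zero_add]
    exact div_nonneg (mul_nonneg hB.fst_diag_nonneg hA.snd_diag_nonneg) zero_le_two
  · have hmul : 0 ≤ 2 * A.1 * mdet A B := by
      rw [two_mul_fst_diag_mul_mdet]
      exact add_nonneg (hB _) (mul_nonneg hB.fst_diag_nonneg hA.detH_nonneg)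
    exact nonneg_of_mul_nonneg_right hmul (by positivity)

lemma mdet_pos {A B : Herm} (hA : NonnegDefH A) (hA₀ : A ≠ 0) (hB : PosDefH B) :
    0 < mdet A B := by
  obtain hα | hα := hA.fst_diag_nonneg.eq_or_lt'
  · rw [mdet_of_offDiag_eq_zero B (hA.offDiag_eq_zero hα), hα, zero_mul, zero_add]
    exact half_pos (mul_pos hB.fst_diag_pos (hA.snd_diag_pos hα hA₀))
  · have hξ : (-A.2.2, A.1 • octUnit) ≠ 0 := by simp [hα.ne', octUnit_ne_zero]
    have hmul : 0 < 2 * A.1 * mdet A B := by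
      rw [two_mul_fst_diag_mul_mdet]
      exact add_pos_of_pos_of_nonneg (hB _ hξ) (mul_nonneg hB.fst_diag_pos.le hA.detH_nonneg)
    exact pos_of_mul_pos_right hmul (by positivity)

theorem mixed_det_positive_general (A B : Herm) :
    (NonnegDefH A → A ≠ 0 → PosDefH B → 0 < mdet A B) ∧
    (NonnegDefH A → NonnegDefH B → 0 ≤ mdet A B) :=
  ⟨mdet_pos, mdet_nonneg⟩

/-- Lemma 5.9: the mixed determinant of positive definite matrices is positive,
and of nonnegative definite matrices is nonnegative. -/
theorem mixed_det_positive (A B : Herm) :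
    (PosDefH A → PosDefH B → 0 < mdet A B) ∧
    (NonnegDefH A → NonnegDefH B → 0 ≤ mdet A B) := by
  obtain ⟨hpos, hnonneg⟩ := mixed_det_positive_general A B
  exact ⟨fun hA ↦ hpos hA.nonnegDefH hA.ne_zero, hnonneg⟩
end
end

section
/- Any two octonionic lines in 𝕆² either intersect only in the zero vector or coincide; moreover, every nonzero vector ξ ∈ 𝕆² is contained in exactly one octonionic line. (Lemma 3.2(ii),(iii).) -/
noncomputable section

open scoped Quaternion

/-- An octonionic (right) line in 𝕆²: either L_a = {(q, a·q) : q ∈ 𝕆} for some a ∈ 𝕆,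
or the line at infinity L_∞ = {(0, q) : q ∈ 𝕆}. -/
def IsOLine (L : Set (Oct × Oct)) : Prop :=
  (∃ a : Oct, L = {p | ∃ q : Oct, p = (q, omul a q)}) ∨
  L = {p | ∃ q : Oct, p = (0, q)}

/-!
Although `𝕆` is not associative, `(a · b) · b̄ = |b|² a` for all `a, b : 𝕆`, so for `b ≠ 0` right
multiplication by `b` is a bijection of `𝕆`. Hence a vector `(b, c)` with `b ≠ 0` lies on `L_a` for
exactly one slope `a`, the solution of `a · b = c`, and it does not lie on `L_∞`; a nonzero vector
`(0, c)` lies on `L_∞` and on no `L_a`. Two lines with a common nonzero vector therefore coincide.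
-/

theorem onSq_eq_normSq_add_normSq_s6 (b : Oct) :
    onSq b = Quaternion.normSq b.1 + Quaternion.normSq b.2 := by
  simp [onSq, oRe, omul, oconj, Quaternion.self_mul_star, Quaternion.star_mul_self]

theorem onSq_eq_zero {b : Oct} : onSq b = 0 ↔ b = 0 := by
  rw [onSq_eq_normSq_add_normSq_s6,
    add_eq_zero_iff_of_nonneg Quaternion.normSq_nonneg Quaternion.normSq_nonneg,
    Quaternion.normSq_eq_zero, Quaternion.normSq_eq_zero, Prod.ext_iff, Prod.fst_zero,
    Prod.snd_zero]

theorem oconj_oconj (b : Oct) : oconj (oconj b) = b := by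
  simp [oconj]

theorem onSq_oconj (b : Oct) : onSq (oconj b) = onSq b := by
  simp [onSq_eq_normSq_add_normSq_s6, oconj]

theorem omul_zero (a : Oct) : omul a 0 = 0 := by
  simp [omul]

theorem smul_omul_s6 (r : ℝ) (a b : Oct) : omul (r • a) b = r • omul a b := by
  simp [omul, smul_sub]

theorem omul_omul_oconj (a b : Oct) : omul (omul a b) (oconj b) = onSq b • a := by
  obtain ⟨x, y⟩ := a
  obtain ⟨w, z⟩ := b
  have fst_eq : (x * w - star z * y) * star w - star (-z) * (z * x + y * star w) =
      x * (w * star w) + star z * z * x := by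
    rw [star_neg]
    noncomm_ring
  have snd_eq : -z * (x * w - star z * y) + (z * x + y * star w) * star (star w) =
      z * star z * y + y * (star w * w) := by
    rw [star_star]
    noncomm_ring
  rw [onSq_eq_normSq_add_normSq_s6]
  ext1
  · simp only [omul, oconj, fst_eq, Quaternion.self_mul_star, Quaternion.star_mul_self,
      Quaternion.mul_coe_eq_smul, Quaternion.coe_mul_eq_smul, Prod.smul_fst, Prod.fst_add, add_smul]
  · simp only [omul, oconj, snd_eq, Quaternion.self_mul_star, Quaternion.star_mul_self,
      Quaternion.mul_coe_eq_smul, Quaternion.coe_mul_eq_smul, Prod.smul_snd, Prod.snd_add, add_smul,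
      add_comm]

theorem omul_oconj_omul (a b : Oct) : omul (omul a (oconj b)) b = onSq b • a := by
  simpa only [oconj_oconj, onSq_oconj] using omul_omul_oconj a (oconj b)

theorem omul_left_injective {b : Oct} (hb : b ≠ 0) : Function.Injective (omul · b) := by
  intro a c (h : omul a b = omul c b)
  refine smul_right_injective Oct (onSq_eq_zero.not.2 hb) ?_
  calc
    onSq b • a = omul (omul a b) (oconj b) := (omul_omul_oconj a b).symm
    _ = omul (omul c b) (oconj b) := by rw [h]
    _ = onSq b • c := omul_omul_oconj c b

theorem omul_left_surjective {b : Oct} (hb : b ≠ 0) : Function.Surjective (omul · b) := by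
  refine fun c ↦ ⟨(onSq b)⁻¹ • omul c (oconj b), ?_⟩
  calc
    omul ((onSq b)⁻¹ • omul c (oconj b)) b = (onSq b)⁻¹ • onSq b • c := by
      rw [smul_omul_s6, omul_oconj_omul]
    _ = c := inv_smul_smul₀ (onSq_eq_zero.not.2 hb) c

/-- The octonionic line `L_a` of slope `a`, given by its equation rather than by the
parametrization used in `IsOLine`. -/
def oLine (a : Oct) : Set (Oct × Oct) := {p | p.2 = omul a p.1}

/-- The octonionic line at infinity `L_∞`, given by its equation. -/
def oLineInfty : Set (Oct × Oct) := {p | p.1 = 0}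

theorem isOLine_iff {L : Set (Oct × Oct)} : IsOLine L ↔ (∃ a, L = oLine a) ∨ L = oLineInfty := by
  have setOf_eq_oLine (a : Oct) : {p | ∃ q : Oct, p = (q, omul a q)} = oLine a := by
    ext ⟨b, c⟩
    simp [oLine, -Prod.exists]
  have setOf_eq_oLineInfty : {p : Oct × Oct | ∃ q : Oct, p = (0, q)} = oLineInfty := by
    ext ⟨b, c⟩
    simp [oLineInfty, -Prod.exists]
  simp only [IsOLine, setOf_eq_oLine, setOf_eq_oLineInfty]

theorem IsOLine.zero_mem {L : Set (Oct × Oct)} (hL : IsOLine L) : 0 ∈ L := by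
  obtain ⟨a, rfl⟩ | rfl := isOLine_iff.1 hL
  · exact (omul_zero a).symm
  · rfl

theorem fst_ne_zero_of_mem_oLine {a : Oct} {ξ : Oct × Oct} (hξ : ξ ≠ 0) (hmem : ξ ∈ oLine a) :
    ξ.1 ≠ 0 := by
  intro hfst
  have hsnd : ξ.2 = 0 := by rw [show ξ.2 = omul a ξ.1 from hmem, hfst, omul_zero]
  exact hξ (Prod.ext hfst hsnd)

theorem eq_of_mem_oLine {a c : Oct} {ξ : Oct × Oct} (hξ : ξ ≠ 0) (ha : ξ ∈ oLine a)
    (hc : ξ ∈ oLine c) : a = c :=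
  omul_left_injective (fst_ne_zero_of_mem_oLine hξ ha) (ha.symm.trans hc)

theorem exists_isOLine_mem (ξ : Oct × Oct) : ∃ L, IsOLine L ∧ ξ ∈ L := by
  by_cases hfst : ξ.1 = 0
  · exact ⟨oLineInfty, isOLine_iff.2 (.inr rfl), hfst⟩
  · obtain ⟨a, ha⟩ := omul_left_surjective hfst ξ.2
    exact ⟨oLine a, isOLine_iff.2 (.inl ⟨a, rfl⟩), ha.symm⟩

theorem IsOLine.eq_of_mem_of_mem {L M : Set (Oct × Oct)} (hL : IsOLine L) (hM : IsOLine M)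
    {ξ : Oct × Oct} (hξ : ξ ≠ 0) (hξL : ξ ∈ L) (hξM : ξ ∈ M) : L = M := by
  obtain ⟨a, rfl⟩ | rfl := isOLine_iff.1 hL <;> obtain ⟨c, rfl⟩ | rfl := isOLine_iff.1 hM
  · rw [eq_of_mem_oLine hξ hξL hξM]
  · exact absurd hξM (fst_ne_zero_of_mem_oLine hξ hξL)
  · exact absurd hξL (fst_ne_zero_of_mem_oLine hξ hξM)
  · rfl

theorem IsOLine.inter_eq_zero_or_eq {L M : Set (Oct × Oct)} (hL : IsOLine L) (hM : IsOLine M) :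
    L ∩ M = {0} ∨ L = M := by
  by_cases h : ∃ ξ ∈ L ∩ M, ξ ≠ 0
  · obtain ⟨ξ, ⟨hξL, hξM⟩, hξ⟩ := h
    exact .inr (hL.eq_of_mem_of_mem hM hξ hξL hξM)
  · push Not at h
    exact .inl (Set.eq_singleton_iff_unique_mem.2 ⟨⟨hL.zero_mem, hM.zero_mem⟩, h⟩)

theorem existsUnique_isOLine_mem {ξ : Oct × Oct} (hξ : ξ ≠ 0) : ∃! L, IsOLine L ∧ ξ ∈ L :=
  existsUnique_of_exists_of_unique (exists_isOLine_mem ξ)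
    fun _ _ ⟨hL, hξL⟩ ⟨hM, hξM⟩ ↦ hL.eq_of_mem_of_mem hM hξ hξL hξM

/-- Lemma 3.2(ii),(iii): two octonionic lines either meet only at 0 or coincide,
and every nonzero vector of 𝕆² lies on exactly one octonionic line. -/
theorem octonionic_lines_intersect :
    (∀ L₁ L₂ : Set (Oct × Oct), IsOLine L₁ → IsOLine L₂ →
        L₁ ∩ L₂ = {0} ∨ L₁ = L₂) ∧
    (∀ ξ : Oct × Oct, ξ ≠ 0 →
        ∃! L : Set (Oct × Oct), IsOLine L ∧ ξ ∈ L) :=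
  ⟨fun _ _ hL hM ↦ hL.inter_eq_zero_or_eq hM, fun _ hξ ↦ existsUnique_isOLine_mem hξ⟩
end
end

section
/- Let A = (α, β, q) be an octonionic Hermitian 2×2 matrix and let b : ℝ¹⁶ → ℝ be the quadratic form b(ξ) = Re(ξ*Aξ) under the identification ℝ¹⁶ ≅ 𝕆². Then the octonionic Hessian of b is constant and equal to 16·A, i.e. Δ₁b ≡ 16·α, Δ₂b ≡ 16·β, and b_{1̄2} ≡ 16·q. (Lemma 5.3, θ∘j = Id.) -/
noncomputable section

open scoped Quaternion

/-- The point space ℝ¹⁶, with coordinates x_i^p, i = 1,2 and p = 0,…,7. -/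
abbrev Pt : Type := Fin 2 → Fin 8 → ℝ

def qI : ℍ[ℝ] := ⟨0, 1, 0, 0⟩
def qJ : ℍ[ℝ] := ⟨0, 0, 1, 0⟩
def qK : ℍ[ℝ] := ⟨0, 0, 0, 1⟩

/-- The standard real basis e₀ = 1, e₁, …, e₇ of the octonions. -/
def e : Fin 8 → Oct :=
  ![((1 : ℍ[ℝ]), 0), (qI, 0), (qJ, 0), (qK, 0),
    (0, (1 : ℍ[ℝ])), (0, qI), (0, qJ), (0, qK)]

/-- The coordinate unit vector of the coordinate x_i^p. -/
def uvec (i : Fin 2) (p : Fin 8) : Pt := Pi.single i (Pi.single p 1)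

/-- Partial derivative ∂f/∂x_i^p of a real-valued function on ℝ¹⁶. -/
def pd (i : Fin 2) (p : Fin 8) (f : Pt → ℝ) : Pt → ℝ :=
  fun x => fderiv ℝ f x (uvec i p)

/-- The entry f_{ī j} = Σ_{p,q} e_p·(∂²f/∂x_i^p∂x_j^q)·conj(e_q) of the octonionic Hessian. -/
def hessEntry (f : Pt → ℝ) (i j : Fin 2) (x : Pt) : Oct :=
  ∑ p, ∑ q, pd i p (pd j q f) x • omul (e p) (oconj (e q))

/-- The Laplacian Δᵢ = Σ_p ∂²/∂(x_i^p)² in the i-th octonionic variable. -/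
def lap (i : Fin 2) (f : Pt → ℝ) (x : Pt) : ℝ := ∑ p, pd i p (pd i p f) x

/-- The identification ℝ¹⁶ ≅ 𝕆². -/
def toO2 (x : Pt) : Oct × Oct := (∑ p, x 0 p • e p, ∑ p, x 1 p • e p)

/-!
The second derivative of a quadratic form along `u` and `v` is its polar form at `(u, v)`.
For `b(ξ) = Re(ξ*Aξ)` the unit vectors of one octonionic variable have `b`-value `α` or `β`, whence
the Laplacians, while the polar form of `e_p` in the first variable and `e_q` in the second is twice
the `e_p`-coordinate of `a·e_q`, where `a` is the off-diagonal entry of `A`. Summing over `p`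
rebuilds `2 (a·e_q)·conj(e_q)`, which is `2a` since `(a·b)·conj(b) = |b|²a` even without
associativity, and there are eight values of `q`.
-/

theorem polar_quadraticMap_comp {R M N P : Type*} [CommRing R] [AddCommGroup M] [AddCommGroup N]
    [AddCommGroup P] [Module R M] [Module R N] [Module R P] (Q : QuadraticMap R N P)
    (f : M →ₗ[R] N) (u v : M) :
    QuadraticMap.polar (Q.comp f) u v = QuadraticMap.polar Q (f u) (f v) := by
  simp only [QuadraticMap.polar, QuadraticMap.comp_apply, map_add]

section Derivatives

variable {𝕜 E F : Type*} [NontriviallyNormedField 𝕜] [CompleteSpace 𝕜]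
  [NormedAddCommGroup E] [NormedSpace 𝕜 E] [FiniteDimensional 𝕜 E]
  [NormedAddCommGroup F] [NormedSpace 𝕜 F]

theorem hasFDerivAt_quadraticMap (Q : QuadraticMap 𝕜 E F) (x : E) :
    HasFDerivAt Q (LinearMap.toContinuousLinearMap (Q.polarBilin x)) x := by
  obtain ⟨B, rfl⟩ := LinearMap.BilinMap.toQuadraticMap_surjective Q
  refine (B.toContinuousBilinearMap.hasFDerivAt_of_bilinear
    (hasFDerivAt_id x) (hasFDerivAt_id x)).congr_fderiv ?_
  ext v
  simp [LinearMap.BilinMap.polar_toQuadraticMap]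

theorem fderiv_fderiv_quadraticMap (Q : QuadraticMap 𝕜 E F) (u v x : E) :
    fderiv 𝕜 (fun y ↦ fderiv 𝕜 Q y v) x u = QuadraticMap.polar Q u v := by
  have fderiv_eq (y : E) : fderiv 𝕜 Q y v = Q.polarBilin.flip v y := by
    simp [(hasFDerivAt_quadraticMap Q y).fderiv]
  simp only [fderiv_eq]
  exact DFunLike.congr_fun (LinearMap.toContinuousLinearMap (Q.polarBilin.flip v)).fderiv u

end Derivatives

theorem pd_pd_quadraticForm (Q : QuadraticForm ℝ Pt) (i j : Fin 2) (p q : Fin 8) (x : Pt) :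
    pd i p (pd j q Q) x = QuadraticMap.polar Q (uvec i p) (uvec j q) :=
  fderiv_fderiv_quadraticMap Q _ _ x

theorem lap_quadraticForm (Q : QuadraticForm ℝ Pt) (i : Fin 2) (x : Pt) :
    lap i Q x = 2 * ∑ p, Q (uvec i p) := by
  simp only [lap, pd_pd_quadraticForm, QuadraticMap.polar_self, two_nsmul, ← two_mul,
    Finset.mul_sum]

theorem hessEntry_quadraticForm (Q : QuadraticForm ℝ Pt) (i j : Fin 2) (x : Pt) :
    hessEntry Q i j x =
      ∑ p, ∑ q, QuadraticMap.polar Q (uvec i p) (uvec j q) • omul (e p) (oconj (e q)) := by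
  simp only [hessEntry, pd_pd_quadraticForm]

/-- Octonionic multiplication as an `ℝ`-bilinear map. -/
def omulBilin : Oct →ₗ[ℝ] Oct →ₗ[ℝ] Oct :=
  LinearMap.mk₂ ℝ omul
    (fun a b c ↦ by ext1 <;> simp only [omul, Prod.fst_add, Prod.snd_add] <;> noncomm_ring)
    (fun r a b ↦ by simp [omul, smul_sub])
    (fun a b c ↦ by
      ext1 <;> simp only [omul, Prod.fst_add, Prod.snd_add, star_add] <;> noncomm_ring)
    (fun r a b ↦ by simp [omul, smul_sub])

/-- Octonionic conjugation as an `ℝ`-linear map. -/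
def oconjLin : Oct →ₗ[ℝ] Oct where
  toFun := oconj
  map_add' a b := by simp [oconj, add_comm]
  map_smul' r a := by simp [oconj]

/-- The real part of an octonion as an `ℝ`-linear functional. -/
def oReLin : Oct →ₗ[ℝ] ℝ where
  toFun := oRe
  map_add' a b := by simp [oRe]
  map_smul' r a := by simp [oRe]

/-- The squared norm `onSq` bundled as a `QuadraticForm`, the diagonal of
`(a, b) ↦ Re(a·conj(b))`. -/
def onSqForm : QuadraticForm ℝ Oct :=
  LinearMap.BilinMap.toQuadraticMap ((omulBilin.compr₂ oReLin).compl₂ oconjLin)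

/-- The form `qform A` bundled as a `QuadraticForm`, the cross term being the diagonal of
`(ξ, η) ↦ Re(conj(ξ₁)·(q·η₂))`. -/
def hermForm (A : Herm) : QuadraticForm ℝ (Oct × Oct) :=
  A.1 • onSqForm.comp (LinearMap.fst ℝ Oct Oct) + A.2.1 • onSqForm.comp (LinearMap.snd ℝ Oct Oct) +
    (2 : ℝ) • LinearMap.BilinMap.toQuadraticMap
      ((omulBilin.compr₂ oReLin).compl₁₂ (oconjLin ∘ₗ LinearMap.fst ℝ Oct Oct)
        (omulBilin A.2.2 ∘ₗ LinearMap.snd ℝ Oct Oct))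

theorem coe_hermForm (A : Herm) : ⇑(hermForm A) = qform A :=
  rfl

/-- The identification `ℝ¹⁶ ≅ 𝕆²` as a linear map. -/
def toO2Lin : Pt →ₗ[ℝ] Oct × Oct :=
  (Fintype.linearCombination ℝ e ∘ₗ LinearMap.proj 0).prod
    (Fintype.linearCombination ℝ e ∘ₗ LinearMap.proj 1)

theorem coe_toO2Lin : ⇑toO2Lin = toO2 :=
  rfl

theorem toO2_uvec_zero (p : Fin 8) : toO2 (uvec 0 p) = (e p, 0) := by
  simp [toO2, uvec, Pi.single_apply]

theorem toO2_uvec_one (p : Fin 8) : toO2 (uvec 1 p) = (0, e p) := by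
  simp [toO2, uvec, Pi.single_apply]

theorem onSq_eq_normSq_add_normSq_s9 (a : Oct) :
    onSq a = Quaternion.normSq a.1 + Quaternion.normSq a.2 := by
  simp [onSq, oRe, omul, oconj, Quaternion.self_mul_star, Quaternion.star_mul_self]

attribute [simps] qI qJ qK

theorem onSq_e (p : Fin 8) : onSq (e p) = 1 := by
  fin_cases p <;> simp [onSq_eq_normSq_add_normSq_s9, e, Quaternion.normSq_def']

theorem sum_oRe_oconj_e_smul_e (w : Oct) : ∑ p, oRe (omul (oconj (e p)) w) • e p = w := by
  ext <;> simp [oRe, omul, oconj, e, Fin.sum_univ_eight]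

theorem sum_oRe_oconj_e_smul_omul (w b : Oct) :
    ∑ p, oRe (omul (oconj (e p)) w) • omul (e p) b = omul w b := by
  calc ∑ p, oRe (omul (oconj (e p)) w) • omulBilin (e p) b
      = omulBilin (∑ p, oRe (omul (oconj (e p)) w) • e p) b := by
        simp only [map_sum, map_smul, LinearMap.sum_apply, LinearMap.smul_apply]
    _ = omulBilin w b := by rw [sum_oRe_oconj_e_smul_e]

theorem qform_inl (A : Herm) (a : Oct) : qform A (a, 0) = A.1 * onSq a := by
  simp [qform, omul, oRe, onSq]

theorem qform_inr (A : Herm) (b : Oct) : qform A (0, b) = A.2.1 * onSq b := by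
  simp [qform, omul, oRe, oconj, onSq]

theorem polar_qform_inl_inr (A : Herm) (a b : Oct) :
    QuadraticMap.polar (qform A) (a, 0) (0, b) = 2 * oRe (omul (oconj a) (omul A.2.2 b)) := by
  rw [QuadraticMap.polar, qform_inl, qform_inr, Prod.mk_add_mk, add_zero, zero_add]
  simp only [qform]
  ring

theorem sum_sum_polar_qform_smul (A : Herm) :
    ∑ p, ∑ q, QuadraticMap.polar (qform A) (e p, 0) (0, e q) • omul (e p) (oconj (e q)) =
      (16 : ℝ) • A.2.2 := by
  simp only [polar_qform_inl_inr, mul_smul]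
  rw [Finset.sum_comm]
  simp only [← Finset.smul_sum, sum_oRe_oconj_e_smul_omul, omul_omul_oconj, onSq_e, one_smul,
    Finset.sum_const, Finset.card_univ, Fintype.card_fin]
  module

/-- Lemma 5.3 (θ∘j = Id): for an octonionic Hermitian matrix A = (α, β, q), the
octonionic Hessian of the quadratic form b(ξ) = Re(ξ*Aξ) on ℝ¹⁶ ≅ 𝕆² is constant,
equal to 16·A: Δ₁b ≡ 16α, Δ₂b ≡ 16β and b_{1̄2} ≡ 16q. -/
theorem hess_of_qform (A : Herm) (x : Pt) :
    lap 0 (fun y => qform A (toO2 y)) x = 16 * A.1 ∧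
    lap 1 (fun y => qform A (toO2 y)) x = 16 * A.2.1 ∧
    hessEntry (fun y => qform A (toO2 y)) 0 1 x = (16 : ℝ) • A.2.2 := by
  have b_eq : (fun y ↦ qform A (toO2 y)) = (hermForm A).comp toO2Lin := rfl
  rw [b_eq]
  refine ⟨?_, ?_, ?_⟩
  · simp only [lap_quadraticForm, QuadraticMap.comp_apply, coe_hermForm, coe_toO2Lin,
      toO2_uvec_zero, qform_inl, onSq_e, Finset.sum_const, Finset.card_univ, Fintype.card_fin]
    ring
  · simp only [lap_quadraticForm, QuadraticMap.comp_apply, coe_hermForm, coe_toO2Lin,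
      toO2_uvec_one, qform_inr, onSq_e, Finset.sum_const, Finset.card_univ, Fintype.card_fin]
    ring
  · simp only [hessEntry_quadraticForm, polar_quadraticMap_comp, coe_hermForm, coe_toO2Lin,
      toO2_uvec_zero, toO2_uvec_one, sum_sum_polar_qform_smul]
end
end
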